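/- arXiv:2512.11445 — 2 statements merged into one kernel-verified Lean document; each statement's English description precedes it below -/
import Mathlib

section
/- Let s ≥ 1 and let S be a DS(n, s) sequence whose symbols belong to a set T of n symbols. Suppose T is the disjoint union of k nonempty subsets T_1, …, T_k such that the restricted sequence S_{T_i} has length C_i ≥ 1 for each i, and set C = C_1 + ⋯ + C_k. Then k·|S| ≤ C·λ_s(3k). (This is a precise form of the paper's Combination Theorem for restricted Davenport–Schinzel sequences, stated there as |S| = O(C·λ_s(k)/k).) -/
/-- The alternating list `a, b, a, b, …` of length `m`. -/
def altList {α : Type*} (a b : α) : ℕ → List α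
  | 0 => []
  | m + 1 => a :: altList b a m

/-- `S` is a Davenport–Schinzel sequence of order `s` on (at most) `n` symbols:
it uses at most `n` distinct symbols, no two adjacent elements are equal, and it
contains no alternating subsequence `a, b, a, b, …` of length `s + 2` for distinct
symbols `a, b`. -/
def IsDSSeq {α : Type*} [DecidableEq α] (n s : ℕ) (S : List α) : Prop :=
  S.toFinset.card ≤ n ∧ S.Chain' (· ≠ ·) ∧
    ∀ a b : α, a ≠ b → ¬ (altList a b (s + 2)).Sublist S

/-- `lambdaDS s n` is the maximum length `λ_s(n)` of a `DS(n, s)` sequence. -/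
noncomputable def lambdaDS (s n : ℕ) : ℕ :=
  sSup {m | ∃ S : List ℕ, IsDSSeq n s S ∧ S.length = m}

/-- The restriction `S_A` of a sequence `S` to a set of symbols `A`: delete all
elements not in `A`, then collapse each maximal run of equal adjacent elements
into a single element. -/
def restrictSeq {α : Type*} [DecidableEq α] (S : List α) (A : Finset α) : List α :=
  (S.filter fun x => decide (x ∈ A)).destutter (· ≠ ·)

/-- Number of runs of a list. -/
def runCount {α : Type*} [DecidableEq α] : List α → ℕ
  | [] => 0
  | [_] => 1
  | x :: y :: l => (if x = y then 0 else 1) + runCount (y :: l)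

theorem runCount_cons_ge {α : Type*} [DecidableEq α] (x : α) (l : List α) :
    runCount l ≤ runCount (x :: l) := by
  cases l <;> simp [runCount]

theorem runCount_cons_le {α : Type*} [DecidableEq α] (x : α) (l : List α) :
    runCount (x :: l) ≤ runCount l + 1 := by
  cases l with
  | nil => simp [runCount]
  | cons y l => simp only [runCount]; split_ifs <;> omega

theorem runCount_append {α : Type*} [DecidableEq α] (L B : List α) :
    runCount L + runCount B ≤ runCount (L ++ B) + 1 := by
  induction L with
  | nil => simp [runCount]
  | cons x L ih =>
    cases L with
    | nil =>
      have := runCount_cons_ge x B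
      simp [runCount]; omega
    | cons y L =>
      simp only [runCount, List.cons_append] at ih ⊢
      omega

theorem card_le_runCount {α : Type*} [DecidableEq α] (l : List α) :
    l.toFinset.card ≤ runCount l := by
  induction l with
  | nil => simp
  | cons x l ih =>
    cases l with
    | nil => simp [runCount]
    | cons y l =>
      simp only [runCount]
      by_cases h : x = y
      · subst h
        simpa using ih
      · rw [if_neg h, List.toFinset_cons]
        have := Finset.card_insert_le x (y :: l).toFinset
        omega

theorem length_destutter_eq {α : Type*} [DecidableEq α] (l : List α) :
    (l.destutter (· ≠ ·)).length = runCount l := by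
  induction l with
  | nil => simp [runCount]
  | cons x l ih =>
    cases l with
    | nil => simp [runCount]
    | cons y l =>
      by_cases h : x = y
      · subst h
        simp [runCount, List.destutter_cons'] at ih ⊢
        exact ih
      · simp [runCount, List.destutter_cons', h] at ih ⊢
        omega

/-- Chop a list in consecutive pairs. -/
def chopPairs {α : Type*} : List α → List (α × α)
  | x :: y :: l => (x, y) :: chopPairs l
  | _ => []

theorem length_chopPairs {α : Type*} : ∀ l : List α, l.length ≤ 2 * (chopPairs l).length + 1
  | [] => by simp
  | [_] => by simp
  | x :: y :: l => by
    have := length_chopPairs l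
    simp [chopPairs]; omega

theorem altList_count {α : Type*} [DecidableEq α] (a b : α) : ∀ l : List α,
    (altList a b (2 * (chopPairs l).count (a, b))).Sublist l
  | [] => by simp [chopPairs, altList]
  | [_] => by simp [chopPairs, altList]
  | x :: y :: l => by
    have ih := altList_count a b l
    simp only [chopPairs, List.count_cons]
    by_cases h : x = a ∧ y = b
    · obtain ⟨rfl, rfl⟩ := h
      simp only [BEq.rfl, if_true, Nat.mul_add, altList, Nat.mul_one]
      exact (ih.cons_cons _).cons_cons _
    · have : ((x, y) == (a, b)) = false := by simpa using h
      rw [this]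
      exact (ih.cons _).cons _

theorem altList_mono {α : Type*} (m : ℕ) : ∀ (a b : α) (p : ℕ), m ≤ p →
    (altList a b m).Sublist (altList a b p) := by
  induction m with
  | zero => intro a b p _; simp [altList]
  | succ m ih =>
    intro a b p h
    obtain ⟨p, rfl⟩ : ∃ q, p = q + 1 := ⟨p - 1, by omega⟩
    exact (ih b a p (by omega)).cons_cons _

theorem chopPairs_mem {α : Type*} (R : α → α → Prop) : ∀ (l : List α), l.IsChain R →
    ∀ p ∈ chopPairs l, p.1 ∈ l ∧ p.2 ∈ l ∧ R p.1 p.2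
  | [], _ => by simp [chopPairs]
  | [_], _ => by simp [chopPairs]
  | x :: y :: l, h => by
    intro p hp
    simp only [chopPairs, List.mem_cons] at hp
    rcases hp with rfl | hp
    · simp at h ⊢; exact h.1
    · have := chopPairs_mem R l h.tail.tail p hp
      simp [this]

theorem ds_length_bound {α : Type*} [DecidableEq α] (n s : ℕ) (S : List α)
    (h : IsDSSeq n s S) : S.length ≤ 2 * (n * n * (s + 2)) + 1 := by
  obtain ⟨h1, h2, h3⟩ := h
  have hlen := length_chopPairs S
  have hm := chopPairs_mem _ S h2
  have : (chopPairs S).length ≤ n * n * (s + 2) := by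
    have e : ∑ p ∈ (chopPairs S).toFinset, (chopPairs S).count p = (chopPairs S).length := by
      rw [← List.sum_toFinset_count_eq_length]
      refine Finset.sum_congr rfl fun p _ => ?_
      congr 1
      exact lawful_beq_subsingleton _ _
    rw [← e]
    calc ∑ p ∈ (chopPairs S).toFinset, (chopPairs S).count p
        ≤ ∑ p ∈ (chopPairs S).toFinset, (s + 2) := by
          apply Finset.sum_le_sum
          rintro ⟨a, b⟩ hp
          by_contra hc
          have hab := (hm (a, b) (by simpa using hp)).2.2
          exact h3 a b hab ((altList_mono (s + 2) a b _ (by omega)).trans (altList_count a b S))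
      _ = (chopPairs S).toFinset.card * (s + 2) := by simp
      _ ≤ n * n * (s + 2) := by
          gcongr
          calc (chopPairs S).toFinset.card ≤ (S.toFinset ×ˢ S.toFinset).card := by
                apply Finset.card_le_card
                intro p hp
                have := hm p (by simpa using hp)
                simp [this]
            _ ≤ n * n := by rw [Finset.card_product]; gcongr
  omega

theorem altList_map {α β : Type*} (f : α → β) (m : ℕ) : ∀ a b : α,
    (altList a b m).map f = altList (f a) (f b) m := by
  induction m with
  | zero => intros; rfl
  | succ m ih => intro a b; simp [altList, ih]

theorem altList_eq_mem {α : Type*} (a b : α) (m : ℕ) (S : List α)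
    (h : (altList a b (m + 2)).Sublist S) : a ∈ S ∧ b ∈ S :=
  ⟨h.subset (by simp [altList]), h.subset (by simp [altList])⟩

theorem ds_length_le_lambda {α : Type*} [DecidableEq α] (n s : ℕ) (S : List α)
    (h : IsDSSeq n s S) : S.length ≤ lambdaDS s n := by
  classical
  let f : α → ℕ := fun x => S.idxOf x
  have hf : ∀ a ∈ S, ∀ b, f a = f b → a = b := fun a ha b hab => (List.idxOf_inj ha).1 hab
  apply le_csSup
  · refine ⟨2 * (n * n * (s + 2)) + 1, ?_⟩
    rintro m ⟨S2, hd, rfl⟩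
    exact ds_length_bound n s S2 hd
  · refine ⟨S.map f, ⟨?_, ?_, ?_⟩, by simp⟩
    · have e : (S.map f).toFinset = S.toFinset.image f := by ext; simp
      rw [e]
      exact Finset.card_image_le.trans h.1
    · have h2 : S.IsChain (· ≠ ·) := h.2.1
      show (S.map f).IsChain (· ≠ ·)
      rw [List.isChain_map]
      rw [List.isChain_iff_getElem] at h2 ⊢
      intro i hi he
      exact h2 i hi (hf _ (List.getElem_mem _) _ he)
    · intro a b hab hs
      obtain ⟨ha, hb⟩ := altList_eq_mem a b s _ hs
      obtain ⟨a, ha, rfl⟩ := List.mem_map.1 ha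
      obtain ⟨b, hb, rfl⟩ := List.mem_map.1 hb
      rw [← altList_map] at hs
      obtain ⟨l, hl, he⟩ := List.sublist_map_iff.1 hs
      have : l = altList a b (s + 2) := by
        have hinj : ∀ (l1 l2 : List α), (∀ x ∈ l2, x ∈ S) → l1.map f = l2.map f → l2 = l1 := by
          intro l1
          induction l1 with
          | nil => intro l2 _ h; simpa using h.symm
          | cons x l1 ih =>
            intro l2 h2 h
            cases l2 with
            | nil => simp at h
            | cons y l2 =>
              simp only [List.map_cons, List.cons.injEq] at h
              rw [hf y (h2 y (by simp)) x h.1.symm, ih l2 (fun z hz => h2 z (by simp [hz])) h.2]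
        exact hinj _ _ (fun x hx => hl.subset hx) he
      subst this
      exact h.2.2 a b (fun e => hab (by rw [e])) hl

/-- Total number of runs over all classes. -/
def totalRuns {α : Type*} [DecidableEq α] {k : ℕ} (Ti : Fin k → Finset α) (S : List α) : ℕ :=
  ∑ i, runCount (S.filter fun x => decide (x ∈ Ti i))

theorem totalRuns_append {α : Type*} [DecidableEq α] {k : ℕ} (Ti : Fin k → Finset α)
    (L B : List α) : totalRuns Ti L + totalRuns Ti B ≤ totalRuns Ti (L ++ B) + k := by
  unfold totalRuns
  rw [← Finset.sum_add_distrib]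
  calc _ ≤ ∑ i : Fin k, (runCount ((L ++ B).filter fun x => decide (x ∈ Ti i)) + 1) := by
        apply Finset.sum_le_sum
        intro i _
        rw [List.filter_append]
        exact runCount_append _ _
    _ = _ := by simp [Finset.sum_add_distrib]

theorem totalRuns_cons {α : Type*} [DecidableEq α] {k : ℕ} (Ti : Fin k → Finset α)
    (hdisj : ∀ i j : Fin k, i ≠ j → Disjoint (Ti i) (Ti j)) (x : α) (S : List α) :
    totalRuns Ti (x :: S) ≤ totalRuns Ti S + 1 := by
  unfold totalRuns
  calc _ ≤ ∑ i : Fin k, (runCount (S.filter fun x => decide (x ∈ Ti i)) +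
          if x ∈ Ti i then 1 else 0) := by
        apply Finset.sum_le_sum
        intro i _
        by_cases h : x ∈ Ti i
        · simp only [List.filter_cons, h, decide_true, if_true]
          exact runCount_cons_le _ _
        · simp [h]
    _ ≤ _ := by
        rw [Finset.sum_add_distrib]
        gcongr
        rw [← Finset.card_filter, Finset.card_le_one]
        intro i hi j hj
        by_contra hij
        simp only [Finset.mem_filter, Finset.mem_univ, true_and] at hi hj
        exact Finset.disjoint_left.1 (hdisj i j hij) hi hj

theorem card_le_totalRuns {α : Type*} [DecidableEq α] {k : ℕ} (Ti : Fin k → Finset α)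
    (S : List α) (hST : ∀ x ∈ S, ∃ i, x ∈ Ti i) : S.toFinset.card ≤ totalRuns Ti S := by
  calc S.toFinset.card
      ≤ (Finset.univ.biUnion fun i : Fin k =>
          (S.filter fun x => decide (x ∈ Ti i)).toFinset).card := by
        apply Finset.card_le_card
        intro x hx
        have hxS : x ∈ S := by simpa using hx
        obtain ⟨i, hi⟩ := hST x hxS
        simp only [Finset.mem_biUnion, Finset.mem_univ, true_and]
        exact ⟨i, by simp [hxS, hi]⟩
    _ ≤ ∑ i : Fin k, (S.filter fun x => decide (x ∈ Ti i)).toFinset.card :=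
        Finset.card_biUnion_le
    _ ≤ _ := Finset.sum_le_sum fun i _ => card_le_runCount _

theorem exists_split {α : Type*} [DecidableEq α] {k : ℕ} (Ti : Fin k → Finset α)
    (hdisj : ∀ i j : Fin k, i ≠ j → Disjoint (Ti i) (Ti j)) (m : ℕ) (S : List α)
    (hm : m ≤ totalRuns Ti S) : ∃ L B, S = L ++ B ∧ totalRuns Ti B = m := by
  induction S with
  | nil =>
    refine ⟨[], [], rfl, ?_⟩
    simp [totalRuns, runCount] at hm ⊢
    exact hm.symm
  | cons x S ih =>
    by_cases h : m ≤ totalRuns Ti S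
    · obtain ⟨L, B, rfl, hB⟩ := ih h
      exact ⟨x :: L, B, rfl, hB⟩
    · have := totalRuns_cons Ti hdisj x S
      exact ⟨[], x :: S, rfl, by omega⟩

theorem combination_aux {α : Type*} [DecidableEq α] (s k : ℕ) (hk : 1 ≤ k)
    (Ti : Fin k → Finset α)
    (hdisj : ∀ i j : Fin k, i ≠ j → Disjoint (Ti i) (Ti j)) (N : ℕ) :
    ∀ S : List α, S.length ≤ N → S.IsChain (· ≠ ·) →
    (∀ a b : α, a ≠ b → ¬ (altList a b (s + 2)).Sublist S) →
    (∀ x ∈ S, ∃ i, x ∈ Ti i) →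
    k * S.length ≤ max (totalRuns Ti S) k * lambdaDS s (3 * k) := by
  induction N with
  | zero => intro S h; simp at h; simp [h]
  | succ N ih =>
    intro S hN hc ha hT
    by_cases h : totalRuns Ti S ≤ 3 * k
    · have : S.length ≤ lambdaDS s (3 * k) :=
        ds_length_le_lambda _ _ S ⟨(card_le_totalRuns Ti S hT).trans h, hc, ha⟩
      exact Nat.mul_le_mul (le_max_right _ _) this
    · obtain ⟨L, B, rfl, hB⟩ := exists_split Ti hdisj (3 * k) S (by omega)
      have hBl : B.length ≠ 0 := by
        intro h0
        rw [List.length_eq_zero_iff] at h0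
        subst h0
        simp [totalRuns, runCount] at hB
        omega
      have hBT : ∀ x ∈ B, ∃ i, x ∈ Ti i := fun x hx => hT x (by simp [hx])
      have hcc := List.isChain_append.1 hc
      have h1 : B.length ≤ lambdaDS s (3 * k) :=
        ds_length_le_lambda _ _ B ⟨(card_le_totalRuns Ti B hBT).trans hB.le, hcc.2.1,
          fun a b hab hs => ha a b hab (hs.trans (List.sublist_append_right _ _))⟩
      have h2 := ih L (by simp at hN; omega) hcc.1
        (fun a b hab hs => ha a b hab (hs.trans (List.sublist_append_left _ _)))
        (fun x hx => hT x (by simp [hx]))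
      have h3 := totalRuns_append Ti L B
      calc k * (L ++ B).length = k * L.length + k * B.length := by
            rw [List.length_append, Nat.mul_add]
        _ ≤ max (totalRuns Ti L) k * lambdaDS s (3 * k) + k * lambdaDS s (3 * k) := by
            gcongr
        _ = (max (totalRuns Ti L) k + k) * lambdaDS s (3 * k) := by ring
        _ ≤ _ := by
            apply Nat.mul_le_mul_right
            omega

/-- Combination theorem for restricted Davenport–Schinzel sequences: if the symbol
set `T` of a `DS(n, s)` sequence `S` is partitioned into `k` nonempty subsets
`T_1, …, T_k`, and the restricted sequence `S_{T_i}` has length `C_i ≥ 1`, then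
`k * |S| ≤ (C_1 + ⋯ + C_k) * λ_s(3k)`. -/
theorem restricted_ds_combination {α : Type*} [DecidableEq α]
    (s n k : ℕ) (hs : 1 ≤ s)
    (T : Finset α) (hTcard : T.card = n)
    (S : List α) (hS : IsDSSeq n s S) (hST : ∀ x ∈ S, x ∈ T)
    (Ti : Fin k → Finset α)
    (hTiT : T = Finset.univ.biUnion Ti)
    (hdisj : ∀ i j : Fin k, i ≠ j → Disjoint (Ti i) (Ti j))
    (hne : ∀ i : Fin k, (Ti i).Nonempty)
    (C : Fin k → ℕ)
    (hC : ∀ i : Fin k, (restrictSeq S (Ti i)).length = C i)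
    (hC1 : ∀ i : Fin k, 1 ≤ C i) :
    k * S.length ≤ (∑ i : Fin k, C i) * lambdaDS s (3 * k) := by
  rcases Nat.eq_zero_or_pos k with rfl | hk
  · simp
  have hsum : ∑ i : Fin k, C i = totalRuns Ti S := by
    unfold totalRuns
    refine Finset.sum_congr rfl fun i _ => ?_
    rw [← hC i, restrictSeq, length_destutter_eq]
  have hge : k ≤ ∑ i : Fin k, C i := by
    calc k = ∑ _i : Fin k, 1 := by simp
      _ ≤ _ := Finset.sum_le_sum fun i _ => hC1 i
  have hT : ∀ x ∈ S, ∃ i, x ∈ Ti i := by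
    intro x hx
    have := hST x hx
    rw [hTiT] at this
    simpa using this
  have := combination_aux s k hk Ti hdisj S.length S le_rfl hS.2.1 hS.2.2 hT
  rw [← hsum, max_eq_left hge] at this
  exact this
end

section
/- Let u ≥ 2. Every circular (u, 2) Davenport–Schinzel sequence has length at most 2u − 2. -/
/-- `S`, viewed as a circular sequence, is a circular `(u, 2)` Davenport–Schinzel
sequence: it uses at most `u` distinct symbols, no two cyclically adjacent
elements are equal, and it contains no four positions appearing in this cyclic
order and carrying the symbols `a, b, a, b` for distinct symbols `a, b`
(a cyclic alternation of length 4). Cyclic conditions are expressed via all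
rotations of the list. -/
def IsCircularDS2 {α : Type*} [DecidableEq α] (u : ℕ) (S : List α) : Prop :=
  S.toFinset.card ≤ u ∧
    (∀ r : ℕ, (S.rotate r).Chain' (· ≠ ·)) ∧
    (∀ a b : α, a ≠ b → ∀ r : ℕ, ¬ [a, b, a, b].Sublist (S.rotate r))

theorem linear_ds2_aux {α : Type*} [DecidableEq α] (n : ℕ) : ∀ l : List α, l.length ≤ n →
    l ≠ [] → l.IsChain (· ≠ ·) → (∀ a b : α, a ≠ b → ¬ [a, b, a, b].Sublist l) →
    l.length + 1 ≤ 2 * l.toFinset.card := by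
  induction n with
  | zero => intro l hl hne; simp_all
  | succ n ih =>
    intro l hl hne hc hs
    obtain ⟨x, t, rfl⟩ := List.exists_cons_of_ne_nil hne
    by_cases hx : x ∈ t
    · obtain ⟨m, r, hm, rfl⟩ : ∃ m r, x ∉ m ∧ t = m ++ x :: r := by
        obtain ⟨m, r, h1, h2⟩ := List.eq_append_cons_of_mem hx
        exact ⟨m, r, h2, h1⟩
      have hmne : m ≠ [] := by
        rintro rfl
        simp at hc
      have hlen : m.length + (r.length + 1) ≤ n := by simpa using hl
      have s1 : m.Sublist (x :: (m ++ x :: r)) :=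
        (List.sublist_append_left _ _).trans (List.sublist_cons_self _ _)
      have hsuf : (x :: r) <:+ (x :: (m ++ x :: r)) := ⟨x :: m, by simp⟩
      have c0 : (m ++ x :: r).IsChain (· ≠ ·) := hc.tail
      have c1 : m.IsChain (· ≠ ·) := (List.isChain_append.1 c0).1
      have c2 : (x :: r).IsChain (· ≠ ·) := (List.isChain_append.1 c0).2.1
      have h1 := ih m (by omega) hmne c1 (fun a b hab h => hs a b hab (h.trans s1))
      have h2 := ih (x :: r) (by simp; omega) (by simp) c2
        (fun a b hab h => hs a b hab (h.trans hsuf.sublist))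
      have hd : Disjoint m.toFinset (x :: r).toFinset := by
        rw [Finset.disjoint_left]
        intro y hy hy'
        rw [List.mem_toFinset] at hy hy'
        have hyx : x ≠ y := fun h => hm (h ▸ hy)
        have hyr : y ∈ r := by
          rcases List.mem_cons.1 hy' with h | h
          · exact absurd h.symm hyx
          · exact h
        refine hs x y hyx (List.Sublist.cons_cons x ?_)
        exact List.Sublist.append (List.singleton_sublist.2 hy)
          (List.Sublist.cons_cons x (List.singleton_sublist.2 hyr))
      have he : (x :: (m ++ x :: r)).toFinset = m.toFinset ∪ (x :: r).toFinset := by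
        ext z; simp <;> tauto
      rw [he, Finset.card_union_of_disjoint hd]
      simp only [List.length_cons, List.length_append] at *
      omega
    · rw [List.toFinset_cons, Finset.card_insert_of_notMem (by simpa using hx)]
      by_cases ht : t = []
      · subst ht; simp
      · have := ih t (by simpa using hl) ht hc.tail
          (fun a b hab h => hs a b hab (h.trans (List.sublist_cons_self _ _)))
        simp only [List.length_cons]
        omega

/-- Every circular `(u, 2)` Davenport–Schinzel sequence with `u ≥ 2` has length at
most `2u - 2`. -/
theorem circular_ds2_length_le {α : Type*} [DecidableEq α]
    (u : ℕ) (hu : 2 ≤ u) (S : List α) (h : IsCircularDS2 u S) :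
    S.length ≤ 2 * u - 2 := by
  obtain ⟨hcard, hchain, hsub⟩ := h
  rcases S with _ | ⟨x, t⟩
  · simp
  by_cases ht : t = []
  · subst ht; simp; omega
  have c0 : (x :: t).IsChain (· ≠ ·) := by
    have h0 : ((x :: t).rotate 0).IsChain (· ≠ ·) := hchain 0
    simpa using h0
  have c1 : (t ++ [x]).IsChain (· ≠ ·) := by
    have h0 : ((x :: t).rotate 1).IsChain (· ≠ ·) := hchain 1
    simpa using h0
  have s0 : ∀ a b : α, a ≠ b → ¬ [a, b, a, b].Sublist (x :: t) := fun a b hab => by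
    simpa using hsub a b hab 0
  have c : (x :: t ++ [x]).IsChain (· ≠ ·) := by
    obtain ⟨y, t', rfl⟩ := List.exists_cons_of_ne_nil ht
    rw [List.isChain_cons_cons] at c0
    simp only [List.cons_append] at c1 ⊢
    rw [List.isChain_cons_cons]
    exact ⟨c0.1, c1⟩
  have key := linear_ds2_aux _ (x :: t ++ [x]) le_rfl (by simp) c (by
    intro a b hab hh
    obtain ⟨l1, l2, he, h1, h2⟩ := List.sublist_append_iff.1 hh
    have h2l := h2.length_le
    rcases l2 with _ | ⟨z, _ | ⟨w, l2⟩⟩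
    · simp only [List.append_nil] at he
      subst he
      exact s0 a b hab h1
    · have hz : z = x := by simpa using h2
      have he' : [a, b, a] ++ [b] = l1 ++ [z] := by simpa using he
      obtain ⟨e1, e2⟩ := List.append_inj' he' rfl
      have hb : b = x := by simp at e2; exact e2.trans hz
      subst e1 hb
      cases h1 with
      | cons _ h1 => exact s0 b a hab.symm (h1.cons_cons _)
      | cons_cons _ h1 => exact hab rfl
    · simp at h2l)
  have he : (x :: t ++ [x]).toFinset = (x :: t).toFinset := by
    ext z; simp <;> tauto
  rw [he] at key
  simp only [List.length_cons, List.length_append, List.length_nil] at *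
  omega
end
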